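/- arXiv:math/0611567 — 3 statements merged into one kernel-verified Lean document; each statement's English description precedes it below -/
import Mathlib

section
/- For every α with 1 < α < 2 there exists a constant C₀ > 0 such that for all positive integers n one has Γ(n/α + 1)/n! ≤ C₀ / (n - ⌊n/α⌋ - 1)!, where for α > 1 and n ≥ 1 the integer n - ⌊n/α⌋ - 1 is nonnegative. -/
/-!
Convexity bounds `Γ` on `[1, m + 1]` by its larger endpoint value, which is `Γ(m + 1) = m!`. For
`x ≤ m ≤ n` this gives `Γ(x + 1) (n - m)! ≤ m! (n - m)! ≤ n!`, the last step because binomial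
coefficients are at least `1`. Taking `m = ⌊x⌋ + 1` yields the claim with constant `1`.
-/

open scoped Nat

theorem Gamma_add_one_le_factorial {x : ℝ} {m : ℕ} (hx : 0 ≤ x) (hxm : x ≤ m) :
    Real.Gamma (x + 1) ≤ m ! := by
  have one_le_factorial : (1 : ℝ) ≤ m ! := mod_cast m.factorial_pos
  calc
    Real.Gamma (x + 1) ≤ max (Real.Gamma 1) (Real.Gamma (m + 1)) :=
      Real.convexOn_Gamma.le_max_of_mem_Icc (Set.mem_Ioi.2 one_pos)
        (Set.mem_Ioi.2 m.cast_add_one_pos) ⟨by linarith, by linarith⟩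
    _ = m ! := by rw [Real.Gamma_one, Real.Gamma_nat_eq_factorial, max_eq_right one_le_factorial]

theorem Gamma_add_one_div_factorial_le {x : ℝ} {m n : ℕ} (hx : 0 ≤ x) (hxm : x ≤ m)
    (hmn : m ≤ n) : Real.Gamma (x + 1) / n ! ≤ 1 / (n - m)! := by
  have factorial_mul_le : m ! * (n - m)! ≤ n ! :=
    Nat.le_of_dvd n.factorial_pos (Nat.factorial_mul_factorial_dvd_factorial hmn)
  rw [div_le_div_iff₀ (by positivity) (by positivity), one_mul]
  calc
    Real.Gamma (x + 1) * (n - m)! ≤ m ! * (n - m)! := by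
      gcongr
      exact Gamma_add_one_le_factorial hx hxm
    _ ≤ n ! := mod_cast factorial_mul_le

theorem gamma_div_factorial_le_general {x : ℝ} {n : ℕ} (hx : 0 ≤ x) (hxn : x < n) :
    Real.Gamma (x + 1) / n ! ≤ 1 / (n - ⌊x⌋₊ - 1)! := by
  have le_floor_add_one : x ≤ (⌊x⌋₊ + 1 : ℕ) := mod_cast (Nat.lt_floor_add_one x).le
  have floor_lt : ⌊x⌋₊ < n := (Nat.floor_lt hx).2 hxn
  rw [Nat.sub_sub]
  exact Gamma_add_one_div_factorial_le hx le_floor_add_one floor_lt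

/-- For every α with 1 < α < 2 there exists C₀ > 0 such that for all positive integers n,
Γ(n/α + 1)/n! ≤ C₀ / (n - ⌊n/α⌋ - 1)!. -/
theorem gamma_div_factorial_le (α : ℝ) (hα₁ : 1 < α) (hα₂ : α < 2) :
    ∃ C₀ : ℝ, 0 < C₀ ∧ ∀ n : ℕ, 1 ≤ n →
      Real.Gamma ((n : ℝ) / α + 1) / (Nat.factorial n)
        ≤ C₀ / (Nat.factorial (n - ⌊(n : ℝ) / α⌋₊ - 1)) :=
  ⟨1, one_pos, fun _ hn => gamma_div_factorial_le_general (by positivity)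
    (div_lt_self (by positivity) hα₁)⟩
end

section
/- Let 1 < α < 2 and -1 ≤ β ≤ 1. For every real u, the series Σ_{n=1}^∞ (-1)^(n-1) · Γ(n/α + 1)/n! · sin(π n (1 - β(2-α)/α)/2) · u^(n-1) converges absolutely. -/
/-!
The logarithm of `Γ` is convex on `(0, ∞)` and vanishes at `1`, so `Γ (a x + 1) ≤ Γ (x + 1) ^ a` for
`0 ≤ a ≤ 1`. With `a = 1 / α` and `x = n` this bounds the coefficient `Γ (n / α + 1) / n!` by
`n! ^ (1 / α - 1)`. The exponent is negative, hence these bounds decay faster than any geometric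
sequence.
-/

open Filter Topology

section GammaBounds

variable {a : ℝ}

theorem Gamma_mul_add_one_le_rpow (ha₀ : 0 ≤ a) (ha₁ : a ≤ 1) {x : ℝ} (hx : -1 < x) :
    Real.Gamma (a * x + 1) ≤ Real.Gamma (x + 1) ^ a := by
  have hx₁ : 0 < x + 1 := by linarith
  have hpoint : a * (x + 1) + (1 - a) * 1 = a * x + 1 := by ring
  have hax : 0 < a * x + 1 := by
    simpa only [smul_eq_mul, hpoint, Set.mem_Ioi] using
      convex_Ioi (0 : ℝ) (Set.mem_Ioi.2 hx₁) (Set.mem_Ioi.2 one_pos)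
        ha₀ (sub_nonneg.2 ha₁) (add_sub_cancel a 1)
  have log_Gamma_le : Real.log (Real.Gamma (a * x + 1)) ≤ a * Real.log (Real.Gamma (x + 1)) := by
    have hconv := Real.convexOn_log_Gamma.2 (Set.mem_Ioi.2 hx₁) (Set.mem_Ioi.2 one_pos)
      ha₀ (sub_nonneg.2 ha₁) (add_sub_cancel a 1)
    simpa only [smul_eq_mul, Function.comp_apply, hpoint, Real.Gamma_one, Real.log_one, mul_zero,
      add_zero] using hconv
  exact (Real.le_rpow_iff_log_le (Real.Gamma_pos_of_pos hax) (Real.Gamma_pos_of_pos hx₁)).2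
    log_Gamma_le

theorem Gamma_mul_natCast_add_one_div_factorial_le (ha₀ : 0 ≤ a) (ha₁ : a ≤ 1) (n : ℕ) :
    Real.Gamma (a * n + 1) / n.factorial ≤ (n.factorial : ℝ) ^ (a - 1) := by
  have hfact : (0 : ℝ) < n.factorial := mod_cast n.factorial_pos
  rw [Real.rpow_sub_one hfact.ne', ← Real.Gamma_nat_eq_factorial]
  gcongr
  exact Gamma_mul_add_one_le_rpow ha₀ ha₁ (by linarith [n.cast_nonneg (α := ℝ)])

end GammaBounds

theorem summable_factorial_rpow_mul_pow {s : ℝ} (hs : s < 0) (r : ℝ) :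
    Summable fun n : ℕ => (n.factorial : ℝ) ^ s * r ^ n := by
  have ratio_tendsto : Tendsto (fun n : ℕ => ((n + 1 : ℕ) : ℝ) ^ s * |r|) atTop (𝓝 0) := by
    have hpow : Tendsto (fun x : ℝ => x ^ s) atTop (𝓝 0) := by
      simpa only [neg_neg] using tendsto_rpow_neg_atTop (neg_pos.2 hs)
    simpa only [zero_mul, Function.comp_def] using
      ((hpow.comp tendsto_natCast_atTop_atTop).comp (tendsto_add_atTop_nat 1)).mul_const |r|
  refine summable_of_ratio_norm_eventually_le one_half_lt_one ?_
  filter_upwards [ratio_tendsto.eventually_le_const one_half_pos] with n hn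
  calc ‖((n + 1).factorial : ℝ) ^ s * r ^ (n + 1)‖
      = ((n + 1 : ℕ) : ℝ) ^ s * |r| * ‖(n.factorial : ℝ) ^ s * r ^ n‖ := by
        rw [Nat.factorial_succ, Nat.cast_mul, Real.mul_rpow (by positivity) (by positivity),
          pow_succ, norm_mul, norm_mul, norm_mul, norm_mul, Real.norm_of_nonneg (by positivity),
          Real.norm_eq_abs r]
        ring
    _ ≤ 1 / 2 * ‖(n.factorial : ℝ) ^ s * r ^ n‖ := by gcongr

section NormedRing

variable {A : Type*} [SeminormedRing A] [NormedSpace ℝ A]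

theorem summable_norm_smul_pow_of_abs_le_factorial_rpow {s : ℝ} (hs : s < 0) {c : ℕ → ℝ}
    (hc : ∀ n, |c n| ≤ (n.factorial : ℝ) ^ s) (x : A) : Summable fun n => ‖c n • x ^ n‖ := by
  refine (summable_factorial_rpow_mul_pow hs ‖x‖).of_norm_bounded_eventually_nat ?_
  filter_upwards [eventually_norm_pow_le x] with n hn
  calc ‖‖c n • x ^ n‖‖ = |c n| * ‖x ^ n‖ := by rw [norm_norm, norm_smul, Real.norm_eq_abs]
    _ ≤ (n.factorial : ℝ) ^ s * ‖x‖ ^ n := by gcongr; exact hc n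

open Real in
theorem series_abs_convergent_general {α : ℝ} (hα : 1 < α) (β : ℝ) (u : A) :
    Summable fun n : ℕ =>
      ‖((-1 : ℝ) ^ n * (Real.Gamma (((n : ℝ) + 1) / α + 1) / (Nat.factorial (n + 1)))
        * Real.sin (π * ((n : ℝ) + 1) * (1 - β * (2 - α) / α) / 2)) • u ^ n‖ := by
  have hα₀ : 0 < α := one_pos.trans hα
  have hα_inv : α⁻¹ < 1 := inv_lt_one_of_one_lt₀ hα
  refine summable_norm_smul_pow_of_abs_le_factorial_rpow (sub_neg.2 hα_inv) (fun n => ?_) u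
  have hcoeff : 0 ≤ Real.Gamma (((n : ℝ) + 1) / α + 1) / (n + 1).factorial :=
    div_nonneg (Gamma_nonneg_of_nonneg (add_pos (div_pos n.cast_add_one_pos hα₀) one_pos).le)
      (Nat.cast_nonneg _)
  calc |(-1 : ℝ) ^ n * (Real.Gamma (((n : ℝ) + 1) / α + 1) / (n + 1).factorial)
          * Real.sin (π * ((n : ℝ) + 1) * (1 - β * (2 - α) / α) / 2)|
      ≤ Real.Gamma (((n : ℝ) + 1) / α + 1) / (n + 1).factorial := by
        rw [abs_mul, abs_mul, abs_neg_one_pow, one_mul, abs_of_nonneg hcoeff]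
        exact mul_le_of_le_one_right hcoeff (abs_sin_le_one _)
    _ = Real.Gamma (α⁻¹ * (n + 1 : ℕ) + 1) / (n + 1).factorial := by
        rw [Nat.cast_succ, div_eq_inv_mul _ α]
    _ ≤ ((n + 1).factorial : ℝ) ^ (α⁻¹ - 1) :=
        Gamma_mul_natCast_add_one_div_factorial_le (inv_pos.2 hα₀).le hα_inv.le (n + 1)
    _ ≤ (n.factorial : ℝ) ^ (α⁻¹ - 1) :=
        rpow_le_rpow_of_nonpos (mod_cast n.factorial_pos)
          (mod_cast Nat.factorial_le n.le_succ) (sub_neg.2 hα_inv).le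

end NormedRing

open Real in
/-- For 1 < α < 2, -1 ≤ β ≤ 1 and any real u, the series
Σ_{n=1}^∞ (-1)^(n-1) Γ(n/α+1)/n! · sin(π n (1 - β(2-α)/α)/2) · u^(n-1)
converges absolutely. -/
theorem series_abs_convergent (α β u : ℝ) (hα₁ : 1 < α) (hα₂ : α < 2)
    (hβ₁ : -1 ≤ β) (hβ₂ : β ≤ 1) :
    Summable (fun n : ℕ =>
      |(-1 : ℝ) ^ n * (Real.Gamma (((n : ℝ) + 1) / α + 1) / (Nat.factorial (n + 1)))
        * Real.sin (π * ((n : ℝ) + 1) * (1 - β * (2 - α) / α) / 2) * u ^ n|) := by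
  simpa only [smul_eq_mul, Real.norm_eq_abs] using series_abs_convergent_general hα₁ β u
end

section
/- Let 0 < α < 1 and -1 ≤ β ≤ 1. For every real u > 0, the series Σ_{n=1}^∞ (-1)^(n-1) · Γ(nα + 1)/n! · sin(π n (1 + β)/(2α)) · u^(-nα - 1) converges absolutely. -/
/-!
Log-convexity of `Γ` on the segment from `1` to `n + 1` gives `Γ(nα + 1) ≤ (n!)^α` for
`0 ≤ α ≤ 1`. Hence `Γ(nα + 1) / n! * |x|^n ≤ |x|^n / (n!)^(1 - α)`, and for `α < 1` the ratio of
consecutive terms on the right, `|x| / (n + 1)^(1 - α)`, tends to `0`. So `∑ Γ(nα + 1) / n! * x^n`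
converges for every `x`; since the sine is bounded, it remains to take `x = u^(-α)`.
-/

open Filter Topology
open scoped Nat

theorem Gamma_mul_add_one_le_rpow_Gamma {α s : ℝ} (hα₀ : 0 ≤ α) (hα₁ : α ≤ 1) (hs : -1 < s) :
    Real.Gamma (s * α + 1) ≤ Real.Gamma (s + 1) ^ α := by
  have hs_pos : s + 1 ∈ Set.Ioi (0 : ℝ) := neg_lt_iff_pos_add.1 hs
  have hseg : α * (s + 1) + (1 - α) * 1 = s * α + 1 := by ring
  have hseg_pos := Real.convexOn_log_Gamma.1 hs_pos (Set.mem_Ioi.2 one_pos) hα₀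
    (sub_nonneg.2 hα₁) (add_sub_cancel α 1)
  have hconvex := Real.convexOn_log_Gamma.2 hs_pos (Set.mem_Ioi.2 one_pos) hα₀
    (sub_nonneg.2 hα₁) (add_sub_cancel α 1)
  simp only [smul_eq_mul, Function.comp_apply, Real.Gamma_one, Real.log_one, mul_zero, add_zero,
    hseg] at hseg_pos hconvex
  exact (Real.le_rpow_iff_log_le (Real.Gamma_pos_of_pos hseg_pos)
    (Real.Gamma_pos_of_pos hs_pos)).2 hconvex

theorem Gamma_natCast_mul_add_one_le_factorial_rpow {α : ℝ} (hα₀ : 0 ≤ α) (hα₁ : α ≤ 1) (n : ℕ) :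
    Real.Gamma (n * α + 1) ≤ (n ! : ℝ) ^ α := by
  rw [← Real.Gamma_nat_eq_factorial]
  exact Gamma_mul_add_one_le_rpow_Gamma hα₀ hα₁ (neg_one_lt_zero.trans_le n.cast_nonneg)

theorem summable_pow_div_factorial_rpow {p : ℝ} (hp : 0 < p) (x : ℝ) :
    Summable fun n : ℕ => x ^ n / (n ! : ℝ) ^ p := by
  have hratio : Tendsto (fun n : ℕ => |x| / ((n + 1 : ℕ) : ℝ) ^ p) atTop (𝓝 0) :=
    ((tendsto_rpow_atTop hp).comp
      (tendsto_natCast_atTop_atTop.comp (tendsto_add_atTop_nat 1))).const_div_atTop |x|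
  refine summable_of_ratio_norm_eventually_le one_half_lt_one ?_
  filter_upwards [hratio.eventually_le_const one_half_pos] with n hn
  calc ‖x ^ (n + 1) / ((n + 1)! : ℝ) ^ p‖
      = |x| / ((n + 1 : ℕ) : ℝ) ^ p * ‖x ^ n / (n ! : ℝ) ^ p‖ := by
        rw [Nat.factorial_succ, Nat.cast_mul, Real.mul_rpow (Nat.cast_nonneg _) (Nat.cast_nonneg _),
          pow_succ', mul_div_mul_comm, norm_mul, norm_div, Real.norm_eq_abs x,
          Real.norm_of_nonneg (by positivity)]
    _ ≤ 1 / 2 * ‖x ^ n / (n ! : ℝ) ^ p‖ := by gcongr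

theorem summable_Gamma_div_factorial_mul_pow {α : ℝ} (hα₀ : 0 ≤ α) (hα₁ : α < 1) (x : ℝ) :
    Summable fun n : ℕ => Real.Gamma (n * α + 1) / n ! * x ^ n := by
  refine .of_norm_bounded (summable_pow_div_factorial_rpow (sub_pos.2 hα₁) |x|) fun n => ?_
  have hfactorial_pos : (0 : ℝ) < n ! := mod_cast n.factorial_pos
  calc ‖Real.Gamma (n * α + 1) / n ! * x ^ n‖
      = Real.Gamma (n * α + 1) / n ! * |x| ^ n := by
        rw [norm_mul, norm_pow, Real.norm_eq_abs x, Real.norm_of_nonneg (by positivity)]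
    _ ≤ (n ! : ℝ) ^ α / n ! * |x| ^ n := by
        gcongr
        exact Gamma_natCast_mul_add_one_le_factorial_rpow hα₀ hα₁.le n
    _ = |x| ^ n / (n ! : ℝ) ^ (1 - α) := by
        rw [Real.rpow_sub hfactorial_pos, Real.rpow_one]
        field_simp

theorem rpow_neg_natCast_mul_sub_one {u : ℝ} (hu : 0 < u) (α : ℝ) (n : ℕ) :
    u ^ (-(n * α) - 1) = (u ^ (-α)) ^ n / u := by
  rw [Real.rpow_sub_one hu.ne', ← Real.rpow_mul_natCast hu.le, neg_mul, mul_comm α]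

open Real in
theorem series_abs_convergent_small_alpha_general (α β u : ℝ) (hα₁ : 0 < α) (hα₂ : α < 1)
    (hu : 0 < u) :
    Summable (fun n : ℕ =>
      |(-1 : ℝ) ^ n * (Real.Gamma (((n : ℝ) + 1) * α + 1) / (Nat.factorial (n + 1)))
        * Real.sin (π * ((n : ℝ) + 1) * (1 + β) / (2 * α))
        * u ^ (-(((n : ℝ) + 1) * α) - 1)|) := by
  have hmajorant := ((summable_nat_add_iff 1).2
    (summable_Gamma_div_factorial_mul_pow hα₁.le hα₂ (u ^ (-α)))).div_const u
  refine .of_nonneg_of_le (fun _ => abs_nonneg _) (fun n => ?_) hmajorant.abs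
  have hpow := rpow_neg_natCast_mul_sub_one hu α (n + 1)
  push_cast at hpow ⊢
  rw [hpow, mul_div_assoc (Gamma _ / _), abs_mul, abs_mul, abs_mul,
    abs_neg_one_pow, one_mul, abs_mul]
  gcongr
  exact mul_le_of_le_one_right (abs_nonneg _) (abs_sin_le_one _)

open Real in
/-- For 0 < α < 1, -1 ≤ β ≤ 1 and real u > 0, the series
Σ_{n=1}^∞ (-1)^(n-1) Γ(nα+1)/n! · sin(π n (1+β)/(2α)) · u^(-nα-1)
converges absolutely. -/
theorem series_abs_convergent_small_alpha (α β u : ℝ) (hα₁ : 0 < α) (hα₂ : α < 1)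
    (hβ₁ : -1 ≤ β) (hβ₂ : β ≤ 1) (hu : 0 < u) :
    Summable (fun n : ℕ =>
      |(-1 : ℝ) ^ n * (Real.Gamma (((n : ℝ) + 1) * α + 1) / (Nat.factorial (n + 1)))
        * Real.sin (π * ((n : ℝ) + 1) * (1 + β) / (2 * α))
        * u ^ (-(((n : ℝ) + 1) * α) - 1)|) :=
  series_abs_convergent_small_alpha_general α β u hα₁ hα₂ hu
end
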